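/- Writing c_∞ for the identity element 1, every element of the monoid Q associated to the game 0.26 can be written uniquely in the form a^i b^m c_n, where i ∈ {0,1}, m ∈ ℕ, n ∈ ℕ ∪ {∞}, and m ≤ n. -/

import Mathlib

/-!
Existence: the relation `b^(n+1) c_n = b^(2n+3)` turns every `a^i b^m c_n` with `m > n` into
`a^i b^(m+n+2)`, and `c_k c_n = b^(min k n + 2) c_(max k n)`, so the elements of the form
`a^i b^m c_n` are closed under multiplication by generators (`exists_form`, `exists_normal`).

Uniqueness: a word has three statistics, namely the number of letters `a`, the weight `W` (where
`b` has weight `1` and `c_n` weight `n + 2`), and the largest weight `N` of a letter `c_n` (`0` if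
there is none). All relations preserve the parity of the first and the value of `W`, and they
preserve `N` except that they may change it within the range `2 N < W + 2`. Identifying two words
when their parities and weights agree, and their `N` agree or both lie in that range, is a
congruence (`invCon`), hence contains the one generated by the relations (`conGen_le_invCon`).
For a normal form with `n` finite, `N = n + 2` and `W = m + n + 2`, so `m ≤ n` says precisely that
`2 N < W + 2` fails; hence `i`, `n` and `m` can be read off.
-/

/-- Generators of the misère quotient of 0.26: `a`, `b`, and `c n` for `n : ℕ`. -/
inductive Gen026 where
  | a : Gen026
  | b : Gen026
  | c : ℕ → Gen026

/-- The free commutative monoid on the generators, written multiplicatively. -/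
abbrev FM026 := Multiplicative (Multiset Gen026)

/-- The generator `x` as an element of the free commutative monoid. -/
def fgen026 (x : Gen026) : FM026 := Multiplicative.ofAdd {x}

def fa : FM026 := fgen026 .a
def fb : FM026 := fgen026 .b
def fc (n : ℕ) : FM026 := fgen026 (.c n)

/-- The defining relations of the quotient `Q`:
`a² = 1`, `b^(n+1) c_n = b^(2n+3)`, and `c_m c_n = b^(m+2) c_n` for `m ≤ n`. -/
def rel026 : FM026 → FM026 → Prop := fun x y =>
  (x = fa ^ 2 ∧ y = 1) ∨
  (∃ n : ℕ, x = fb ^ (n + 1) * fc n ∧ y = fb ^ (2 * n + 3)) ∨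
  (∃ m n : ℕ, m ≤ n ∧ x = fc m * fc n ∧ y = fb ^ (m + 2) * fc n)

/-- The commutative monoid `Q` presented by generators `a`, `b`, `c_n` and the
relations `rel026`. -/
def Q026 : Type := (conGen rel026).Quotient

instance : CommMonoid Q026 := Con.commMonoid _

/-- The image of `a` in `Q`. -/
def qa : Q026 := (conGen rel026).mk' fa
/-- The image of `b` in `Q`. -/
def qb : Q026 := (conGen rel026).mk' fb
/-- The image of `c_n` in `Q`. -/
def qc (n : ℕ) : Q026 := (conGen rel026).mk' (fc n)

/-- The P-portion `P = {a} ∪ {b^(2m) : m ≥ 1} ∪ {b^m c_n : m ≤ n, m + n odd}`. -/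
def P026 : Set Q026 :=
  {x | x = qa} ∪
  {x | ∃ m : ℕ, 1 ≤ m ∧ x = qb ^ (2 * m)} ∪
  {x | ∃ m n : ℕ, m ≤ n ∧ (m + n) % 2 = 1 ∧ x = qb ^ m * qc n}

/-- The pretending function on single heaps. -/
noncomputable def phi026 (k : ℕ) : Q026 :=
  if k ≤ 8 then
    (if k % 4 = 1 then 1 else if k % 4 = 2 then qa
     else if k % 4 = 3 then qb else qa * qb)
  else if k = 9 then qc 0
  else if k = 10 then qa * qc 0
  else if k % 2 = 1 then qc ((k - 9) / 2)
  else qa * qb * qc ((k - 12) / 2)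

/-- The pretending function extended multiplicatively to positions. -/
noncomputable def Phi026 (G : Multiset ℕ) : Q026 := (G.map phi026).prod

/-- `c_n` for `n ∈ ℕ ∪ {∞}`, where `c_∞` denotes the identity element `1`. -/
noncomputable def qcE : ℕ∞ → Q026
  | ⊤ => 1
  | (n : ℕ) => qc n

/-! ### Existence -/

theorem qa_sq : qa ^ 2 = 1 :=
  (Con.eq _).2 (ConGen.Rel.of _ _ (Or.inl ⟨rfl, rfl⟩))

theorem qb_pow_mul_qc (n : ℕ) : qb ^ (n + 1) * qc n = qb ^ (2 * n + 3) :=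
  (Con.eq _).2 (ConGen.Rel.of _ _ (Or.inr (Or.inl ⟨n, rfl, rfl⟩)))

theorem qc_mul_qc {m n : ℕ} (h : m ≤ n) : qc m * qc n = qb ^ (m + 2) * qc n :=
  (Con.eq _).2 (ConGen.Rel.of _ _ (Or.inr (Or.inr ⟨m, n, h, rfl, rfl⟩)))

theorem qcE_top : qcE ⊤ = 1 := rfl

theorem qcE_coe (n : ℕ) : qcE n = qc n := rfl

/-- The image in `Q` of a word, given as a multiset of generators. -/
def qword (s : Multiset Gen026) : Q026 := (conGen rel026).mk' (Multiplicative.ofAdd s)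

theorem qword_zero : qword 0 = 1 := rfl

theorem qword_cons (g : Gen026) (s : Multiset Gen026) :
    qword (g ::ₘ s) = qword {g} * qword s := rfl

theorem qc_mul_qcE (k : ℕ) (n : ℕ∞) : ∃ (j : ℕ) (l : ℕ∞), qc k * qcE n = qb ^ j * qcE l := by
  induction n using ENat.recTopCoe with
  | top => exact ⟨0, k, by rw [qcE_top, qcE_coe, mul_one, pow_zero, one_mul]⟩
  | coe n =>
    rcases le_total k n with h | h
    · exact ⟨k + 2, n, qc_mul_qc h⟩
    · exact ⟨n + 2, k, by rw [qcE_coe, qcE_coe, mul_comm, qc_mul_qc h]⟩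

/-- Every word equals some `a^i b^m c_n`, without constraints on the exponents. -/
theorem exists_form (s : Multiset Gen026) :
    ∃ (i m : ℕ) (n : ℕ∞), qword s = qa ^ i * qb ^ m * qcE n := by
  induction s using Multiset.induction_on with
  | empty => exact ⟨0, 0, ⊤, by rw [qcE_top, qword_zero, pow_zero, pow_zero, mul_one, mul_one]⟩
  | cons g s ih =>
    obtain ⟨i, m, n, h⟩ := ih
    cases g with
    | a =>
      refine ⟨i + 1, m, n, ?_⟩
      rw [qword_cons, h, pow_succ', mul_assoc qa, mul_assoc qa]
      rfl
    | b =>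
      refine ⟨i, m + 1, n, ?_⟩
      rw [qword_cons, h, pow_succ', mul_left_comm (qa ^ i), mul_assoc qb]
      rfl
    | c k =>
      obtain ⟨j, l, hj⟩ := qc_mul_qcE k n
      refine ⟨i, m + j, l, ?_⟩
      rw [qword_cons, h, pow_add, mul_assoc, mul_assoc, mul_assoc (qb ^ m), ← hj,
        mul_left_comm (qb ^ m) (qc k), mul_left_comm (qa ^ i) (qc k)]
      rfl

/-- Any `b^m c_n` can be rewritten so that the exponent of `b` is at most the index of `c`. -/
theorem qb_pow_mul_qcE (m : ℕ) (n : ℕ∞) :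
    ∃ (m' : ℕ) (n' : ℕ∞), (m' : ℕ∞) ≤ n' ∧ qb ^ m * qcE n = qb ^ m' * qcE n' := by
  by_cases h : (m : ℕ∞) ≤ n
  · exact ⟨m, n, h, rfl⟩
  · induction n using ENat.recTopCoe with
    | top => exact absurd le_top h
    | coe n =>
      have h' : n + 1 ≤ m := by
        rw [Nat.cast_le] at h
        omega
      obtain ⟨d, rfl⟩ := Nat.exists_eq_add_of_le' h'
      refine ⟨d + (2 * n + 3), ⊤, le_top, ?_⟩
      rw [qcE_top, qcE_coe, mul_one, pow_add, mul_assoc, qb_pow_mul_qc, ← pow_add]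

theorem exists_normal (s : Multiset Gen026) :
    ∃ p : Fin 2 × ℕ × ℕ∞, (p.2.1 : ℕ∞) ≤ p.2.2 ∧
      qword s = qa ^ (p.1 : ℕ) * qb ^ p.2.1 * qcE p.2.2 := by
  obtain ⟨i, m, n, h⟩ := exists_form s
  obtain ⟨m', n', hle, h'⟩ := qb_pow_mul_qcE m n
  refine ⟨(⟨i % 2, Nat.mod_lt _ two_pos⟩, m', n'), hle, ?_⟩
  rw [h, mul_assoc, h', ← mul_assoc, pow_eq_pow_mod i qa_sq]

/-! ### Uniqueness -/

/-- The letter `a` counts `1`, all other letters count `0`. -/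
def aCount : Gen026 → ℕ
  | .a => 1
  | _ => 0

/-- The weight of a letter; the relations other than `a² = 1` force `c_n` to weigh `n + 2` times
as much as `b`. -/
def weight : Gen026 → ℕ
  | .a => 0
  | .b => 1
  | .c n => n + 2

/-- The weight of a letter `c_n`, and `0` for the other letters. -/
def cWeight : Gen026 → ℕ
  | .c n => n + 2
  | _ => 0

/-- The number of letters `a` in a word. -/
def invA (x : FM026) : ℕ := (x.toAdd.map aCount).sum

/-- The total weight of a word. -/
def invW (x : FM026) : ℕ := (x.toAdd.map weight).sum

/-- The largest weight of a letter `c_n` in a word, or `0` if there is none. -/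
def invN (x : FM026) : ℕ := (x.toAdd.map cWeight).sup

theorem invA_mul (x y : FM026) : invA (x * y) = invA x + invA y := by
  simp [invA]

theorem invW_mul (x y : FM026) : invW (x * y) = invW x + invW y := by
  simp [invW]

theorem invN_mul (x y : FM026) : invN (x * y) = max (invN x) (invN y) := by
  simp [invN]

theorem invA_one : invA 1 = 0 := rfl
theorem invW_one : invW 1 = 0 := rfl
theorem invN_one : invN 1 = 0 := rfl

theorem invA_fa : invA fa = 1 := rfl
theorem invA_fb : invA fb = 0 := rfl
theorem invA_fc (n : ℕ) : invA (fc n) = 0 := rfl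
theorem invW_fa : invW fa = 0 := rfl
theorem invW_fb : invW fb = 1 := rfl
theorem invW_fc (n : ℕ) : invW (fc n) = n + 2 := rfl
theorem invN_fa : invN fa = 0 := rfl
theorem invN_fb : invN fb = 0 := rfl
theorem invN_fc (n : ℕ) : invN (fc n) = n + 2 := by
  simp [invN, fc, fgen026, cWeight]

theorem invA_pow (x : FM026) (k : ℕ) : invA (x ^ k) = k * invA x := by
  induction k with
  | zero => simp [invA_one]
  | succ k ih => rw [pow_succ, invA_mul, ih, Nat.succ_mul]

theorem invW_pow (x : FM026) (k : ℕ) : invW (x ^ k) = k * invW x := by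
  induction k with
  | zero => simp [invW_one]
  | succ k ih => rw [pow_succ, invW_mul, ih, Nat.succ_mul]

/-- Stated for words without letters `c_n`, which avoids a case distinction on the exponent. -/
theorem invN_pow {x : FM026} (hx : invN x = 0) (k : ℕ) : invN (x ^ k) = 0 := by
  induction k with
  | zero => rw [pow_zero, invN_one]
  | succ k ih => rw [pow_succ, invN_mul, ih, hx, max_self]

/-- Words are identified when their numbers of letters `a` have the same parity, their weights `W`
agree, and their largest `c`-weights `N` agree or both satisfy `2 N < W + 2`. -/
def invCon : Con FM026 where
  r x y := invA x % 2 = invA y % 2 ∧ invW x = invW y ∧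
    (invN x = invN y ∨ (2 * invN x < invW x + 2 ∧ 2 * invN y < invW y + 2))
  iseqv :=
    { refl := fun x => ⟨rfl, rfl, Or.inl rfl⟩
      symm := fun h => by omega
      trans := fun h₁ h₂ => by omega }
  mul' := fun {w x y z} h₁ h₂ => by
    simp only [invA_mul, invW_mul, invN_mul]
    omega

theorem conGen_le_invCon : conGen rel026 ≤ invCon := by
  refine Con.conGen_le.2 fun x y h => ?_
  change invA x % 2 = invA y % 2 ∧ invW x = invW y ∧
    (invN x = invN y ∨ (2 * invN x < invW x + 2 ∧ 2 * invN y < invW y + 2))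
  rcases h with ⟨rfl, rfl⟩ | ⟨n, rfl, rfl⟩ | ⟨m, n, hmn, rfl, rfl⟩ <;>
  simp only [invA_mul, invW_mul, invN_mul, invA_pow, invW_pow, invN_pow invN_fa,
    invN_pow invN_fb, invA_fa, invA_fb, invA_fc, invW_fa, invW_fb, invW_fc, invN_fc,
    invA_one, invW_one, invN_one, true_or, and_true] <;>
  omega

/-- A lift of `c_n`, for `n ∈ ℕ ∪ {∞}`, to the free commutative monoid. -/
def fcE : ℕ∞ → FM026
  | ⊤ => 1
  | (n : ℕ) => fc n

theorem fcE_top : fcE ⊤ = 1 := rfl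

theorem fcE_coe (n : ℕ) : fcE n = fc n := rfl

theorem mk_form (i m : ℕ) (n : ℕ∞) :
    (conGen rel026).mk' (fa ^ i * fb ^ m * fcE n) = qa ^ i * qb ^ m * qcE n := by
  induction n using ENat.recTopCoe <;> rfl

theorem normal_unique {i j m m' : ℕ} {n n' : ℕ∞} (hi : i < 2) (hj : j < 2)
    (hm : (m : ℕ∞) ≤ n) (hm' : (m' : ℕ∞) ≤ n')
    (h : qa ^ i * qb ^ m * qcE n = qa ^ j * qb ^ m' * qcE n') :
    i = j ∧ m = m' ∧ n = n' := by
  rw [← mk_form, ← mk_form] at h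
  have h' := conGen_le_invCon ((Con.eq _).1 h)
  change invA _ % 2 = invA _ % 2 ∧ invW _ = invW _ ∧
    (invN _ = invN _ ∨ (2 * invN _ < invW _ + 2 ∧ 2 * invN _ < invW _ + 2)) at h'
  induction n using ENat.recTopCoe <;> induction n' using ENat.recTopCoe <;>
  simp only [fcE_top, fcE_coe, invA_mul, invW_mul, invN_mul, invA_pow, invW_pow,
    invN_pow invN_fa, invN_pow invN_fb, invA_fa, invA_fb, invA_fc, invW_fa, invW_fb, invW_fc,
    invN_fc, invA_one, invW_one, invN_one, Nat.cast_le, Nat.cast_inj,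
    ENat.top_ne_natCast, ENat.natCast_ne_top, and_true, and_false] at h' hm hm' ⊢ <;>
  omega

/-- Every element of `Q` can be written uniquely as `a^i b^m c_n` with
`i ∈ {0,1}`, `m ∈ ℕ`, `n ∈ ℕ ∪ {∞}`, and `m ≤ n` (writing `c_∞ = 1`). -/
theorem Q026_normal_form :
    ∀ x : Q026, ∃! p : Fin 2 × ℕ × ℕ∞,
      (p.2.1 : ℕ∞) ≤ p.2.2 ∧ x = qa ^ (p.1 : ℕ) * qb ^ p.2.1 * qcE p.2.2 := by
  intro x
  obtain ⟨w, rfl⟩ := (conGen rel026).mk'_surjective x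
  obtain ⟨p, hp, hx⟩ := exists_normal w.toAdd
  refine ⟨p, ⟨hp, hx⟩, ?_⟩
  rintro q ⟨hq, hx'⟩
  obtain ⟨h₁, h₂, h₃⟩ := normal_unique q.1.isLt p.1.isLt hq hp (hx'.symm.trans hx)
  exact Prod.ext (Fin.ext h₁) (Prod.ext h₂ h₃)
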